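/- Suppose I_reg ⊆ int(E) is an open interval of maximal length such that for every ε ∈ I_reg there is a maximally complementary solution (X*(ε), y*(ε), S*(ε)) at which the Jacobian J(X*(ε), y*(ε), S*(ε)) is nonsingular, and let ε̄ ∈ int(E) be a boundary point of I_reg. If no strictly complementary optimal solution of (P_{ε̄}) and (D_{ε̄}) exists, then ε̄ is a transition point of the optimal partition. In particular, if both P*(ε̄) and D*(ε̄) are singletons, then ε̄ is a transition point. -/

import Mathlib

open Matrix Set

noncomputable section

variable {n m : ℕ}

/-- Feasibility for the primal SDO problem `(P_ε)` (the feasible set does not depend on `ε`). -/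
def PrimalFeasible (A : Fin m → Matrix (Fin n) (Fin n) ℝ) (b : Fin m → ℝ)
    (X : Matrix (Fin n) (Fin n) ℝ) : Prop :=
  X.IsSymm ∧ (∀ i, ((A i) * X).trace = b i) ∧ X.PosSemidef

/-- Feasibility for the dual SDO problem `(D_ε)`. -/
def DualFeasible (C Cbar : Matrix (Fin n) (Fin n) ℝ)
    (A : Fin m → Matrix (Fin n) (Fin n) ℝ) (ε : ℝ)
    (y : Fin m → ℝ) (S : Matrix (Fin n) (Fin n) ℝ) : Prop :=
  S.IsSymm ∧ (∑ i, y i • A i) + S = C + ε • Cbar ∧ S.PosSemidef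

/-- The optimal value function `v(ε)` of `(P_ε)`, with values in `EReal`. -/
def vfun (C Cbar : Matrix (Fin n) (Fin n) ℝ) (A : Fin m → Matrix (Fin n) (Fin n) ℝ)
    (b : Fin m → ℝ) (ε : ℝ) : EReal :=
  sInf ((fun X => (((C + ε • Cbar) * X).trace : EReal)) '' {X | PrimalFeasible A b X})

/-- `E = {ε : v(ε) > -∞}`. -/
def Eset (C Cbar : Matrix (Fin n) (Fin n) ℝ) (A : Fin m → Matrix (Fin n) (Fin n) ℝ)
    (b : Fin m → ℝ) : Set ℝ :=
  {ε | ⊥ < vfun C Cbar A b ε}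

/-- The primal optimal set `P*(ε)`. -/
def PrimalOpt (C Cbar : Matrix (Fin n) (Fin n) ℝ) (A : Fin m → Matrix (Fin n) (Fin n) ℝ)
    (b : Fin m → ℝ) (ε : ℝ) : Set (Matrix (Fin n) (Fin n) ℝ) :=
  {X | PrimalFeasible A b X ∧ ∀ X', PrimalFeasible A b X' →
    ((C + ε • Cbar) * X).trace ≤ ((C + ε • Cbar) * X').trace}

/-- The dual optimal set `D*(ε)`. -/
def DualOpt (C Cbar : Matrix (Fin n) (Fin n) ℝ) (A : Fin m → Matrix (Fin n) (Fin n) ℝ)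
    (b : Fin m → ℝ) (ε : ℝ) : Set ((Fin m → ℝ) × Matrix (Fin n) (Fin n) ℝ) :=
  {p | DualFeasible C Cbar A ε p.1 p.2 ∧ ∀ y' S', DualFeasible C Cbar A ε y' S' →
    ∑ i, b i * y' i ≤ ∑ i, b i * p.1 i}

/-- A maximally complementary optimal solution: `X` lies in the relative interior of `P*(ε)`
and `(y, S)` in the relative interior of `D*(ε)`. -/
def MaxComp (C Cbar : Matrix (Fin n) (Fin n) ℝ) (A : Fin m → Matrix (Fin n) (Fin n) ℝ)
    (b : Fin m → ℝ) (ε : ℝ) (X : Matrix (Fin n) (Fin n) ℝ) (y : Fin m → ℝ)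
    (S : Matrix (Fin n) (Fin n) ℝ) : Prop :=
  X ∈ intrinsicInterior ℝ (PrimalOpt C Cbar A b ε) ∧
    (y, S) ∈ intrinsicInterior ℝ (DualOpt C Cbar A b ε)

/-- `π(ε) = π(ε')`: the optimal partitions at `ε` and `ε'` coincide, expressed through
maximally complementary solutions (`B = range X*`, `N = range S*`, `T` being determined
by `B` and `N`). -/
def SamePartition (C Cbar : Matrix (Fin n) (Fin n) ℝ) (A : Fin m → Matrix (Fin n) (Fin n) ℝ)
    (b : Fin m → ℝ) (ε ε' : ℝ) : Prop :=
  ∃ X y S X' y' S', MaxComp C Cbar A b ε X y S ∧ MaxComp C Cbar A b ε' X' y' S' ∧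
    LinearMap.range X.mulVecLin = LinearMap.range X'.mulVecLin ∧
    LinearMap.range S.mulVecLin = LinearMap.range S'.mulVecLin

/-- The standing assumptions: symmetric data, linearly independent constraint matrices and
the interior point condition at `ε = 0`. -/
def StandingAssumptions (C Cbar : Matrix (Fin n) (Fin n) ℝ)
    (A : Fin m → Matrix (Fin n) (Fin n) ℝ) (b : Fin m → ℝ) : Prop :=
  C.IsSymm ∧ Cbar.IsSymm ∧ (∀ i, (A i).IsSymm) ∧ LinearIndependent ℝ A ∧
    ∃ X y S, PrimalFeasible A b X ∧ X.PosDef ∧ DualFeasible C Cbar A 0 y S ∧ S.PosDef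

/-- The invariancy set of `ε̄`. -/
def InvSet (C Cbar : Matrix (Fin n) (Fin n) ℝ) (A : Fin m → Matrix (Fin n) (Fin n) ℝ)
    (b : Fin m → ℝ) (εbar : ℝ) : Set ℝ :=
  {ε | ε ∈ interior (Eset C Cbar A b) ∧ SamePartition C Cbar A b ε εbar}

/-- `dim B(ε) = dim B(ε')` and `dim N(ε) = dim N(ε')`, expressed through maximally
complementary solutions. -/
def DimsMatch (C Cbar : Matrix (Fin n) (Fin n) ℝ) (A : Fin m → Matrix (Fin n) (Fin n) ℝ)
    (b : Fin m → ℝ) (ε ε' : ℝ) : Prop :=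
  ∀ X y S X' y' S', MaxComp C Cbar A b ε X y S → MaxComp C Cbar A b ε' X' y' S' →
    Module.finrank ℝ (LinearMap.range X.mulVecLin) =
        Module.finrank ℝ (LinearMap.range X'.mulVecLin) ∧
      Module.finrank ℝ (LinearMap.range S.mulVecLin) =
        Module.finrank ℝ (LinearMap.range S'.mulVecLin)

/-- A transition point: a singleton invariancy set such that every neighborhood contains a
parameter at which `dim B` or `dim N` differs. -/
def IsTransitionPoint (C Cbar : Matrix (Fin n) (Fin n) ℝ) (A : Fin m → Matrix (Fin n) (Fin n) ℝ)
    (b : Fin m → ℝ) (εbar : ℝ) : Prop :=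
  εbar ∈ interior (Eset C Cbar A b) ∧
    (∀ ε ∈ interior (Eset C Cbar A b), ε ≠ εbar → ¬ SamePartition C Cbar A b ε εbar) ∧
    ∀ ξ : ℝ, 0 < ξ → ∃ ε ∈ Set.Ioo (εbar - ξ) (εbar + ξ) ∩ interior (Eset C Cbar A b),
      ¬ DimsMatch C Cbar A b ε εbar

/-- Existence of a strictly complementary optimal solution at `ε`. -/
def HasStrictComp (C Cbar : Matrix (Fin n) (Fin n) ℝ) (A : Fin m → Matrix (Fin n) (Fin n) ℝ)
    (b : Fin m → ℝ) (ε : ℝ) : Prop :=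
  ∃ X y S, X ∈ PrimalOpt C Cbar A b ε ∧ (y, S) ∈ DualOpt C Cbar A b ε ∧ (X + S).PosDef

/-- Nonsingularity of the Jacobian `J(X, y, S)` of the optimality system, as a linear map on
`S^n × ℝ^m × S^n`: only the trivial symmetric triple is mapped to zero. -/
def JNonsingular (A : Fin m → Matrix (Fin n) (Fin n) ℝ)
    (X S : Matrix (Fin n) (Fin n) ℝ) : Prop :=
  ∀ (DX DS : Matrix (Fin n) (Fin n) ℝ) (Dy : Fin m → ℝ), DX.IsSymm → DS.IsSymm →
    (∀ i, ((A i) * DX).trace = 0) → ((∑ i, Dy i • A i) + DS = 0) →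
    (DX * S + S * DX + X * DS + DS * X = 0) → DX = 0 ∧ Dy = 0 ∧ DS = 0

/-- Primal nondegeneracy of a primal feasible `X`. -/
def PrimalNondeg (A : Fin m → Matrix (Fin n) (Fin n) ℝ)
    (X : Matrix (Fin n) (Fin n) ℝ) : Prop :=
  ∃ (r : ℕ) (M₁ : Matrix (Fin n) (Fin r) ℝ) (M₂ : Matrix (Fin n) (Fin (n - r)) ℝ),
    M₁ᵀ * M₁ = 1 ∧ M₂ᵀ * M₂ = 1 ∧ M₁ᵀ * M₂ = 0 ∧
    LinearMap.range M₁.mulVecLin = LinearMap.range X.mulVecLin ∧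
    LinearIndependent ℝ (fun i =>
      Matrix.fromBlocks (M₁ᵀ * (A i) * M₁) (M₁ᵀ * (A i) * M₂) (M₂ᵀ * (A i) * M₁) 0)

/-- Dual nondegeneracy of a dual feasible `(y, S)` (the condition involves only `S`). -/
def DualNondeg (A : Fin m → Matrix (Fin n) (Fin n) ℝ)
    (S : Matrix (Fin n) (Fin n) ℝ) : Prop :=
  ∃ (k : ℕ) (N₁ : Matrix (Fin n) (Fin k) ℝ),
    N₁ᵀ * N₁ = 1 ∧ LinearMap.range N₁.mulVecLin = LinearMap.ker S.mulVecLin ∧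
    ∀ W : Matrix (Fin k) (Fin k) ℝ, W.IsSymm →
      W ∈ Submodule.span ℝ (Set.range fun i => N₁ᵀ * (A i) * N₁)

/-- A central solution with parameter `μ` for the problems `(P_ε)` and `(D_ε)`. -/
def CentralSol (C Cbar : Matrix (Fin n) (Fin n) ℝ) (A : Fin m → Matrix (Fin n) (Fin n) ℝ)
    (b : Fin m → ℝ) (ε μ : ℝ) (X : Matrix (Fin n) (Fin n) ℝ) (y : Fin m → ℝ)
    (S : Matrix (Fin n) (Fin n) ℝ) : Prop :=
  PrimalFeasible A b X ∧ DualFeasible C Cbar A ε y S ∧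
    X * S = μ • (1 : Matrix (Fin n) (Fin n) ℝ)

/-- The Frobenius norm of a matrix. -/
def frobNorm {α β : Type*} [Fintype α] [Fintype β] (M : Matrix α β ℝ) : ℝ :=
  Real.sqrt (∑ i, ∑ j, (M i j) ^ 2)

/-- The spectral norm (induced 2-norm) of a square matrix. -/
def specNorm {N : ℕ} (M : Matrix (Fin N) (Fin N) ℝ) : ℝ :=
  ‖LinearMap.toContinuousLinearMap (Matrix.toEuclideanLin M)‖

/-- The smallest eigenvalue of a symmetric matrix, via the Rayleigh quotient. -/
def lamMin {k : ℕ} (M : Matrix (Fin k) (Fin k) ℝ) : ℝ :=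
  sInf {r : ℝ | ∃ x : Fin k → ℝ, (∑ i, (x i) ^ 2) = 1 ∧ r = x ⬝ᵥ M.mulVec x}

/-- `θ^μ`: the operator norm of the inverse of the Jacobian `J(X, y, S)` on
`S^n × ℝ^m × S^n`, characterized as the least constant `t ≥ 0` with
`‖(ΔX, Δy, ΔS)‖ ≤ t * ‖J(X,y,S)(ΔX, Δy, ΔS)‖` for all symmetric `ΔX`, `ΔS`. -/
def thetaMu (A : Fin m → Matrix (Fin n) (Fin n) ℝ)
    (X S : Matrix (Fin n) (Fin n) ℝ) : ℝ :=
  sInf {t : ℝ | 0 ≤ t ∧ ∀ (DX DS : Matrix (Fin n) (Fin n) ℝ) (Dy : Fin m → ℝ),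
    DX.IsSymm → DS.IsSymm →
    Real.sqrt (frobNorm DX ^ 2 + (∑ i, (Dy i) ^ 2) + frobNorm DS ^ 2) ≤
      t * Real.sqrt ((∑ i, (((A i) * DX).trace) ^ 2) +
        frobNorm ((∑ i, Dy i • A i) + DS) ^ 2 +
        frobNorm ((1 / 2 : ℝ) • (DX * S + S * DX + X * DS + DS * X)) ^ 2)}

/-- A nonlinearity interval: a non-singleton open subinterval of `int(E)`, of maximal length,
on which `dim B(·)` and `dim N(·)` are constant while the optimal partition `π(·)` varies. -/
def IsNonlinearityInterval (C Cbar : Matrix (Fin n) (Fin n) ℝ)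
    (A : Fin m → Matrix (Fin n) (Fin n) ℝ) (b : Fin m → ℝ) (I : Set ℝ) : Prop :=
  I ⊆ interior (Eset C Cbar A b) ∧ IsOpen I ∧ I.OrdConnected ∧
    (∃ a ∈ I, ∃ c ∈ I, a ≠ c) ∧
    (∀ ε ∈ I, ∀ ε' ∈ I, DimsMatch C Cbar A b ε ε') ∧
    ¬ (∀ ε ∈ I, ∀ ε' ∈ I, SamePartition C Cbar A b ε ε') ∧
    ∀ I' : Set ℝ, I ⊆ I' → I' ⊆ interior (Eset C Cbar A b) → IsOpen I' → I'.OrdConnected →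
      (∀ ε ∈ I', ∀ ε' ∈ I', DimsMatch C Cbar A b ε ε') → I' = I

end

/-!
Nonsingularity of `J(X, y, S)` at an optimal solution makes that solution unique and strictly
complementary, so every parameter of `I_reg` is strictly complementary.

Suppose `π(ε) = π(ε̄)` for some `ε ≠ ε̄`, with maximally complementary solutions `(X, y, S)`
and `(X', y', S')`. Since `range S = range S'`, the affine path through the dual solutions at
`ε` and `ε̄` stays dual feasible slightly beyond `ε̄`, and it stays complementary to `X`;
hence it is optimal together with `X`. Near `ε̄` it meets parameters of `I_reg`, where the
optimal pair must be strictly complementary, and as all the slacks on the path vanish on the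
kernel of `S'`, so is `(X', y', S')`.

Similarly, if the dimensions at `ε̄` agreed with those at a parameter of `I_reg`, they would add up
to `n`. Without strict complementarity at `ε̄` both are impossible.

If both optimal sets at `ε̄` are singletons and strict complementarity holds there, then the
Jacobian is nonsingular: an element of its kernel is a direction in which the optimal pair can be
moved within the optimal sets. Uniqueness makes optimal pairs at nearby parameters converge to the
one at `ε̄`, so nonsingularity persists near `ε̄`, against the maximality of `I_reg`.
-/

open scoped Topology ComplexOrder

section MatrixAlgebra

variable {K k l p : Type*} [Field K] [Fintype l]

theorem exists_mul_mul_eq_self [Fintype k] (R : Matrix k l K) :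
    ∃ Q : Matrix l k K, R * Q * R = R := by
  classical
  obtain ⟨g, hg⟩ := R.toLin'.rangeRestrict.exists_rightInverse_of_surjective
    (LinearMap.range_rangeRestrict _)
  obtain ⟨q, hq⟩ := LinearMap.exists_extend g
  refine ⟨LinearMap.toMatrix' q, Matrix.toLin'.injective <| LinearMap.ext fun x => ?_⟩
  have hqx : q (R.toLin' x) = g (R.toLin'.rangeRestrict x) :=
    LinearMap.congr_fun hq (R.toLin'.rangeRestrict x)
  have hgx : R.toLin'.rangeRestrict (g (R.toLin'.rangeRestrict x)) = R.toLin'.rangeRestrict x :=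
    LinearMap.congr_fun hg _
  rw [Matrix.toLin'_mul, Matrix.toLin'_mul, Matrix.toLin'_toMatrix', LinearMap.comp_apply,
    LinearMap.comp_apply, hqx]
  exact congrArg Subtype.val hgx

theorem mul_mul_eq_of_mulVec_eq_zero [Fintype k] {R : Matrix k l K} {B : Matrix p l K}
    {Q : Matrix l k K} (hQ : R * Q * R = R) (h : ∀ x, R *ᵥ x = 0 → B *ᵥ x = 0) :
    B * Q * R = B := by
  classical
  have hR : R * (Q * R - 1) = 0 := by
    rw [Matrix.mul_sub, ← Matrix.mul_assoc, hQ, Matrix.mul_one, sub_self]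
  have hB : B * (Q * R - 1) = 0 := Matrix.ext_of_mulVec_single fun i => by
    rw [← mulVec_mulVec, h _ (by rw [mulVec_mulVec, hR, zero_mulVec]), zero_mulVec]
  rwa [Matrix.mul_sub, ← Matrix.mul_assoc, Matrix.mul_one, sub_eq_zero] at hB

theorem exists_eq_mul_of_range_le [Finite k] [Fintype p] {A : Matrix k p K} {B : Matrix k l K}
    (h : LinearMap.range A.mulVecLin ≤ LinearMap.range B.mulVecLin) :
    ∃ W : Matrix l p K, A = B * W := by
  classical
  cases nonempty_fintype k
  obtain ⟨Q, hQ⟩ := exists_mul_mul_eq_self B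
  refine ⟨Q * A, Matrix.ext_of_mulVec_single fun i => ?_⟩
  obtain ⟨w, hw⟩ := h ⟨Pi.single i 1, rfl⟩
  rw [mulVecLin_apply, mulVecLin_apply] at hw
  rw [← Matrix.mul_assoc, ← mulVec_mulVec, ← hw, mulVec_mulVec, hQ]

theorem mulVec_eq_zero_of_range_le [StarRing K] {A B : Matrix l l K} (hA : A.IsHermitian)
    (hB : B.IsHermitian) (h : LinearMap.range A.mulVecLin ≤ LinearMap.range B.mulVecLin)
    {x : l → K} (hx : B *ᵥ x = 0) : A *ᵥ x = 0 := by
  obtain ⟨W, hW⟩ := exists_eq_mul_of_range_le h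
  rw [← hA.eq, hW, conjTranspose_mul, hB.eq, ← mulVec_mulVec, hx, mulVec_zero]

theorem mul_eq_zero_symm_of_isHermitian [StarRing K] {A B : Matrix l l K} (hA : A.IsHermitian)
    (hB : B.IsHermitian) (h : A * B = 0) : B * A = 0 := by
  simpa only [conjTranspose_mul, hA.eq, hB.eq, conjTranspose_zero] using congrArg conjTranspose h

theorem matrix_rank_add_le [Finite k] (A B : Matrix k l K) : (A + B).rank ≤ A.rank + B.rank := by
  have hle : LinearMap.range (A + B).mulVecLin ≤
      LinearMap.range A.mulVecLin ⊔ LinearMap.range B.mulVecLin := by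
    rintro _ ⟨x, rfl⟩
    rw [mulVecLin_add]
    exact Submodule.add_mem_sup ⟨x, rfl⟩ ⟨x, rfl⟩
  exact (Submodule.finrank_mono hle).trans (Submodule.finrank_add_le_finrank_add_finrank _ _)

end MatrixAlgebra

section PosSemidef

variable {𝕜 ι : Type*} [RCLike 𝕜] {A B : Matrix ι ι 𝕜}

open scoped MatrixOrder Matrix.Norms.L2Operator in
theorem exists_eq_conjTranspose_mul_self_of_posSemidef [Fintype ι] (hA : A.PosSemidef) :
    ∃ R : Matrix ι ι 𝕜, A = Rᴴ * R := by
  classical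
  exact CStarAlgebra.nonneg_iff_eq_star_mul_self.1 hA.nonneg

theorem eventually_posSemidef_one_add_smul [Finite ι] [DecidableEq ι] (hB : B.IsHermitian) :
    ∀ᶠ t in 𝓝 (0 : ℝ), (1 + t • B).PosSemidef := by
  cases nonempty_fintype ι
  have hev : ∀ᶠ t in 𝓝 (0 : ℝ), ∀ i, 0 ≤ 1 + t * hB.eigenvalues i :=
    Filter.eventually_all.2 fun i => Filter.Tendsto.eventually_const_le one_pos <| by
      simpa using Continuous.tendsto (f := fun t : ℝ => 1 + t * hB.eigenvalues i) (by fun_prop) 0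
  filter_upwards [hev] with t ht
  have hspec : 1 + t • B = hB.eigenvectorUnitary.1 *
      diagonal (fun i => ((1 + t * hB.eigenvalues i : ℝ) : 𝕜)) * (hB.eigenvectorUnitary.1)ᴴ := by
    conv_lhs =>
      rw [hB.spectral_theorem, ← map_one (Unitary.conjStarAlgAut 𝕜 _ hB.eigenvectorUnitary),
        RCLike.real_smul_eq_coe_smul (K := 𝕜), ← map_smul, ← map_add,
        Unitary.conjStarAlgAut_apply, ← diagonal_one, ← diagonal_smul, diagonal_add]
    simp [Function.comp_def, star_eq_conjTranspose]
  rw [hspec]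
  exact (PosSemidef.diagonal fun i => RCLike.ofReal_nonneg.2 (ht i)).mul_mul_conjTranspose_same _

-- With `A = Rᴴ * R` the kernel condition gives `B = Rᴴ * M * R`, hence
-- `A + t • B = Rᴴ * (1 + t • M) * R`.
theorem eventually_posSemidef_add_smul [Fintype ι] (hA : A.PosSemidef) (hB : B.IsHermitian)
    (h : ∀ x, A *ᵥ x = 0 → B *ᵥ x = 0) : ∀ᶠ t in 𝓝 (0 : ℝ), (A + t • B).PosSemidef := by
  classical
  obtain ⟨R, rfl⟩ := exists_eq_conjTranspose_mul_self_of_posSemidef hA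
  obtain ⟨Q, hQ⟩ := exists_mul_mul_eq_self R
  have hBQR : B * Q * R = B := mul_mul_eq_of_mulVec_eq_zero hQ fun x hx =>
    h x ((conjTranspose_mul_self_mulVec_eq_zero R x).2 hx)
  have hRQB : Rᴴ * Qᴴ * B = B := by
    simpa only [conjTranspose_mul, hB.eq, Matrix.mul_assoc] using congrArg conjTranspose hBQR
  have hfac : Rᴴ * (Qᴴ * B * Q) * R = B := by
    simp only [← Matrix.mul_assoc, hRQB, hBQR]
  filter_upwards [eventually_posSemidef_one_add_smul (isHermitian_conjTranspose_mul_mul Q hB)]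
    with t ht
  convert ht.conjTranspose_mul_mul_same R using 1
  simp only [Matrix.mul_add, Matrix.add_mul, Matrix.mul_one, Matrix.mul_smul, Matrix.smul_mul,
    hfac]

theorem eventually_posSemidef_add_smul_of_posDef [Finite ι] (hA : A.PosDef)
    (hB : B.IsHermitian) : ∀ᶠ t in 𝓝 (0 : ℝ), (A + t • B).PosSemidef := by
  classical
  cases nonempty_fintype ι
  refine eventually_posSemidef_add_smul hA.posSemidef hB fun x hx => ?_
  rw [mulVec_injective_of_isUnit hA.isUnit (hx.trans (mulVec_zero A).symm), mulVec_zero]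

variable [Fintype ι]

theorem trace_mul_nonneg_of_posSemidef (hA : A.PosSemidef) (hB : B.PosSemidef) :
    0 ≤ (A * B).trace := by
  obtain ⟨R, rfl⟩ := exists_eq_conjTranspose_mul_self_of_posSemidef hA
  rw [trace_mul_comm, ← Matrix.mul_assoc, trace_mul_comm, ← Matrix.mul_assoc]
  exact (hB.mul_mul_conjTranspose_same R).trace_nonneg

theorem mul_eq_zero_of_trace_mul_eq_zero (hA : A.PosSemidef) (hB : B.PosSemidef)
    (h : (A * B).trace = 0) : A * B = 0 := by
  obtain ⟨R, rfl⟩ := exists_eq_conjTranspose_mul_self_of_posSemidef hA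
  obtain ⟨P, rfl⟩ := exists_eq_conjTranspose_mul_self_of_posSemidef hB
  have hPR : P * Rᴴ = 0 := by
    rw [← trace_conjTranspose_mul_self_eq_zero_iff, conjTranspose_mul, conjTranspose_conjTranspose,
      ← h, Matrix.mul_assoc Rᴴ, trace_mul_comm Rᴴ]
    simp only [Matrix.mul_assoc]
  have hRP : R * Pᴴ = 0 := by simpa using congrArg conjTranspose hPR
  rw [Matrix.mul_assoc, ← Matrix.mul_assoc R, hRP, Matrix.zero_mul, Matrix.mul_zero]

theorem posDef_add_iff_forall_mulVec (hA : A.PosSemidef) (hB : B.PosSemidef) :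
    (A + B).PosDef ↔ ∀ x, A *ᵥ x = 0 → B *ᵥ x = 0 → x = 0 := by
  have hker (x : ι → 𝕜) : (A + B) *ᵥ x = 0 ↔ A *ᵥ x = 0 ∧ B *ᵥ x = 0 := by
    rw [← (hA.add hB).dotProduct_mulVec_zero_iff, ← hA.dotProduct_mulVec_zero_iff,
      ← hB.dotProduct_mulVec_zero_iff, add_mulVec, dotProduct_add,
      add_eq_zero_iff_of_nonneg (hA.dotProduct_mulVec_nonneg x) (hB.dotProduct_mulVec_nonneg x)]
  classical
  rw [(hA.add hB).posDef_iff_isUnit, ← mulVec_injective_iff_isUnit, ← coe_mulVecLin,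
    injective_iff_map_eq_zero]
  simp only [mulVecLin_apply, hker, and_imp]

theorem card_le_rank_add_rank_of_posDef_add (h : (A + B).PosDef) :
    Fintype.card ι ≤ A.rank + B.rank := by
  classical
  exact (rank_of_isUnit _ h.isUnit).symm.trans_le (matrix_rank_add_le A B)

theorem posDef_add_of_card_le_rank_add_rank (hA : A.PosSemidef) (hB : B.PosSemidef)
    (hAB : A * B = 0) (h : Fintype.card ι ≤ A.rank + B.rank) : (A + B).PosDef := by
  have hle : LinearMap.range B.mulVecLin ≤ LinearMap.ker A.mulVecLin := by
    rintro _ ⟨x, rfl⟩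
    simp [mulVec_mulVec, hAB]
  have hker : LinearMap.range B.mulVecLin = LinearMap.ker A.mulVecLin := by
    refine Submodule.eq_of_le_of_finrank_le hle ?_
    have := LinearMap.finrank_range_add_finrank_ker A.mulVecLin
    rw [Module.finrank_fintype_fun_eq_card] at this
    exact Nat.le_of_add_le_add_left (this.trans_le h)
  refine (posDef_add_iff_forall_mulVec hA hB).2 fun x hAx hBx => ?_
  obtain ⟨w, rfl⟩ : x ∈ LinearMap.range B.mulVecLin := hker.ge hAx
  refine (conjTranspose_mul_self_mulVec_eq_zero B w).1 ?_
  rwa [hB.isHermitian.eq, ← mulVec_mulVec]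

end PosSemidef

section RealPosSemidef

variable {ι : Type*} {S X : Matrix ι ι ℝ}

theorem isClosed_setOf_posSemidef [Finite ι] : IsClosed {X : Matrix ι ι ℝ | X.PosSemidef} := by
  cases nonempty_fintype ι
  simp only [posSemidef_iff_dotProduct_mulVec, ofPred_and, ofPred_forall]
  refine .inter (isClosed_eq (by fun_prop) continuous_id) (isClosed_iInter fun x => ?_)
  exact isClosed_le continuous_const (by fun_prop)

variable [Fintype ι]

theorem abs_apply_le_trace_of_posSemidef (hX : X.PosSemidef) (i j : ι) : |X i j| ≤ X.trace := by
  obtain ⟨R, rfl⟩ := exists_eq_conjTranspose_mul_self_of_posSemidef hX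
  have hdiag (i : ι) : ∑ k, R k i ^ 2 ≤ (Rᴴ * R).trace := by
    refine le_trans (le_of_eq ?_)
      (Finset.single_le_sum (fun j _ => hX.diag_nonneg (i := j)) (Finset.mem_univ i))
    simp [mul_apply, sq]
  calc |(Rᴴ * R) i j| ≤ ∑ k, |R k i * R k j| := Finset.abs_sum_le_sum_abs _ _
    _ ≤ ∑ k, (R k i ^ 2 + R k j ^ 2) / 2 := Finset.sum_le_sum fun k _ => by
        rw [abs_le]
        constructor <;> nlinarith [sq_nonneg (R k i + R k j), sq_nonneg (R k i - R k j)]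
    _ ≤ (Rᴴ * R).trace := by
        rw [← Finset.sum_div, Finset.sum_add_distrib]
        linarith [hdiag i, hdiag j]

theorem isCompact_setOf_posSemidef_trace_le (r : ℝ) :
    IsCompact {X : Matrix ι ι ℝ | X.PosSemidef ∧ X.trace ≤ r} := by
  have hbox : IsCompact {X : Matrix ι ι ℝ | ∀ i j, X i j ∈ Icc (-r) r} :=
    isCompact_pi_infinite fun i => isCompact_pi_infinite fun j => isCompact_Icc
  refine hbox.of_isClosed_subset ?_ fun X hX i j =>
    abs_le.1 ((abs_apply_le_trace_of_posSemidef hX.1 i j).trans hX.2)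
  exact isClosed_setOf_posSemidef.inter (isClosed_le continuous_id.matrix_trace continuous_const)

theorem exists_pos_mul_trace_le_of_posDef (hS : S.PosDef) :
    ∃ l : ℝ, 0 < l ∧ ∀ X : Matrix ι ι ℝ, X.PosSemidef → l * X.trace ≤ (S * X).trace := by
  classical
  have hev := eventually_posSemidef_add_smul_of_posDef hS (isHermitian_one.neg (α := ℝ))
  obtain ⟨l, hSl, hl⟩ := ((hev.filter_mono nhdsWithin_le_nhds).and
    (self_mem_nhdsWithin (s := Ioi (0 : ℝ)))).exists
  refine ⟨l, hl, fun X hX => ?_⟩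
  have := trace_mul_nonneg_of_posSemidef hSl hX
  simp only [smul_neg, ← sub_eq_add_neg, Matrix.sub_mul, Matrix.smul_mul, Matrix.one_mul,
    trace_sub, trace_smul, smul_eq_mul, sub_nonneg] at this
  exact this

theorem posSemidef_of_forall_trace_mul_nonneg (hS : S.IsHermitian)
    (h : ∀ X : Matrix ι ι ℝ, X.PosSemidef → 0 ≤ (S * X).trace) : S.PosSemidef := by
  refine PosSemidef.of_dotProduct_mulVec_nonneg hS fun x => ?_
  have := h _ (posSemidef_vecMulVec_self_star x)
  rwa [mul_vecMulVec, trace_vecMulVec, dotProduct_comm] at this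

end RealPosSemidef

section ConicDuality

variable {E F : Type*} [AddCommGroup E] [Module ℝ E] [AddCommGroup F] [Module ℝ F]

theorem nonneg_of_forall_nonneg_le_add_mul {u v a : ℝ}
    (h : ∀ s : ℝ, 0 ≤ s → v ≤ u + s * a) : 0 ≤ a := by
  by_contra! ha
  have hs := h ((v - u - 1) / a) (div_nonneg_of_nonpos (by linarith [h 0 le_rfl]) ha.le)
  rw [div_mul_cancel₀ _ ha.ne] at hs
  linarith

theorem exists_dual_eq_comp_of_ker_le {Φ : E →ₗ[ℝ] F} {f : E →ₗ[ℝ] ℝ}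
    (h : LinearMap.ker Φ ≤ LinearMap.ker f) : ∃ g : F →ₗ[ℝ] ℝ, f = g ∘ₗ Φ := by
  have : f ∈ LinearMap.range Φ.dualMap := by
    rw [LinearMap.range_dualMap_eq_dualAnnihilator_ker, Submodule.mem_dualAnnihilator]
    exact fun x hx => h hx
  obtain ⟨g, hg⟩ := this
  exact ⟨g, hg.symm⟩

theorem sub_mul_nonneg_of_forall_le {K : PointedCone ℝ E} {Φ : E →ₗ[ℝ] F} {d : E →ₗ[ℝ] ℝ}
    {x₀ : E} (hx₀ : x₀ ∈ K) {v : ℝ} (hv : ∀ x ∈ K, Φ x = Φ x₀ → v ≤ d x) {x : E} (hx : x ∈ K)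
    {t : ℝ} (ht : 0 ≤ t) (hΦ : Φ x = t • Φ x₀) : 0 ≤ d x - v * t := by
  obtain rfl | ht := ht.eq_or_lt
  · rw [mul_zero, sub_zero]
    refine nonneg_of_forall_nonneg_le_add_mul (u := d x₀) (v := v) fun s hs => ?_
    simpa using hv (x₀ + s • x) (K.add_mem hx₀ (K.smul_mem hs hx)) (by simp [hΦ])
  · have := hv (t⁻¹ • x) (K.smul_mem (inv_nonneg.2 ht.le) hx) (by simp [hΦ, ht.ne'])
    rwa [map_smul, smul_eq_mul, le_inv_mul_iff₀ ht, mul_comm, ← sub_nonneg] at this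

theorem exists_dual_of_forall_le {K : PointedCone ℝ E} {Φ : E →ₗ[ℝ] F} {d : E →ₗ[ℝ] ℝ} {x₀ : E}
    (hx₀ : x₀ ∈ K) (hint : ∀ y, ∃ t : ℝ, t • x₀ + y ∈ K) {v : ℝ}
    (hv : ∀ x ∈ K, Φ x = Φ x₀ → v ≤ d x) :
    ∃ g : F →ₗ[ℝ] ℝ, (∀ x ∈ K, g (Φ x) ≤ d x) ∧ v ≤ g (Φ x₀) := by
  let D : Submodule ℝ (E × ℝ) :=
    LinearMap.ker (Φ ∘ₗ LinearMap.fst ℝ E ℝ - (LinearMap.snd ℝ E ℝ).smulRight (Φ x₀))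
  have mem_D {p : E × ℝ} : p ∈ D ↔ Φ p.1 = p.2 • Φ x₀ := by simp [D, sub_eq_zero]
  let f : E × ℝ →ₗ[ℝ] ℝ := d ∘ₗ LinearMap.fst ℝ E ℝ - v • LinearMap.snd ℝ E ℝ
  have hdense (p : E × ℝ) : ∃ q : D, (q : E × ℝ) + p ∈ K.prod (PointedCone.positive ℝ ℝ) := by
    obtain ⟨t, ht⟩ := hint p.1
    obtain ⟨s, hts, hs⟩ : ∃ s, t ≤ s ∧ 0 ≤ s + p.2 :=
      ⟨max t (-p.2), le_max_left _ _, by linarith [le_max_right t (-p.2)]⟩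
    refine ⟨⟨(s • x₀, s), mem_D.2 (map_smul Φ s x₀)⟩, ?_, hs⟩
    have hsplit : s • x₀ + p.1 = (s - t) • x₀ + (t • x₀ + p.1) := by module
    change s • x₀ + p.1 ∈ K
    rw [hsplit]
    exact K.add_mem (K.smul_mem (sub_nonneg.2 hts) hx₀) ht
  obtain ⟨g, hgf, hg⟩ := riesz_extension (K.prod (PointedCone.positive ℝ ℝ))
    ⟨D, f.domRestrict D⟩ (fun p hp => sub_mul_nonneg_of_forall_le hx₀ hv hp.1 hp.2 (mem_D.1 p.2))
    hdense
  have hgf' {x : E} {t : ℝ} (h : Φ x = t • Φ x₀) : g (x, t) = d x - v * t :=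
    hgf ⟨(x, t), mem_D.2 h⟩
  obtain ⟨l, hl⟩ : ∃ l : F →ₗ[ℝ] ℝ, d - g ∘ₗ LinearMap.inl ℝ E ℝ = l ∘ₗ Φ :=
    exists_dual_eq_comp_of_ker_le fun x hx => by
      simp [hgf' (x := x) (t := 0) (by rw [LinearMap.mem_ker.1 hx, zero_smul])]
  have hl' (x : E) : l (Φ x) = d x - g (x, 0) := (LinearMap.congr_fun hl x).symm
  refine ⟨l, fun x hx => ?_, ?_⟩
  · linarith [hl' x, hg (x, 0) ⟨hx, le_refl (0 : ℝ)⟩]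
  · have h01 : 0 ≤ g (0, 1) := hg (0, 1) ⟨K.zero_mem, zero_le_one' ℝ⟩
    have hx₀1 : g (x₀, 0) + g (0, 1) = d x₀ - v := by
      rw [← map_add, Prod.mk_add_mk, add_zero, zero_add, hgf' (one_smul ℝ _).symm, mul_one]
    linarith [hl' x₀]

end ConicDuality

section SemidefiniteDuality

/-- The cone of positive semidefinite matrices inside the space `S^n` of symmetric matrices, which
is the ambient space in which conic duality is applied. -/
def posSemidefCone (ι : Type*) [Fintype ι] :
    PointedCone ℝ (selfAdjoint.submodule ℝ (Matrix ι ι ℝ)) where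
  carrier := {X | X.1.PosSemidef}
  add_mem' hX hY := hX.add hY
  zero_mem' := PosSemidef.zero
  smul_mem' t _ hX := hX.smul t.2

/-- The linear map `X ↦ (⟨A^i, X⟩)_i` of the primal equality constraints. -/
def constraintMap {n m : ℕ} (A : Fin m → Matrix (Fin n) (Fin n) ℝ) :
    Matrix (Fin n) (Fin n) ℝ →ₗ[ℝ] (Fin m → ℝ) :=
  LinearMap.pi fun i => traceLinearMap _ ℝ ℝ ∘ₗ LinearMap.mulLeft ℝ (A i)

variable {n m : ℕ} {C Cbar : Matrix (Fin n) (Fin n) ℝ} {A : Fin m → Matrix (Fin n) (Fin n) ℝ}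
  {b : Fin m → ℝ} {ε : ℝ} {X S : Matrix (Fin n) (Fin n) ℝ} {y : Fin m → ℝ}

@[simp]
theorem constraintMap_apply (i : Fin m) : constraintMap A X i = (A i * X).trace := rfl

theorem exists_smul_add_mem_posSemidefCone {ι : Type*} [Fintype ι]
    {X : selfAdjoint.submodule ℝ (Matrix ι ι ℝ)} (hX : X.1.PosDef)
    (Y : selfAdjoint.submodule ℝ (Matrix ι ι ℝ)) : ∃ t : ℝ, t • X + Y ∈ posSemidefCone ι := by
  obtain ⟨t, hXY, ht⟩ := (((eventually_posSemidef_add_smul_of_posDef hX Y.2).filter_mono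
    nhdsWithin_le_nhds).and (self_mem_nhdsWithin (s := Ioi (0 : ℝ)))).exists
  refine ⟨t⁻¹, ?_⟩
  have := hXY.smul (inv_nonneg.2 (le_of_lt ht))
  rwa [smul_add, inv_smul_smul₀ (ne_of_gt ht)] at this

theorem trace_objective_mul (hS : DualFeasible C Cbar A ε y S) (hX : PrimalFeasible A b X) :
    ((C + ε • Cbar) * X).trace = ∑ i, b i * y i + (S * X).trace := by
  simp only [← hS.2.1, Matrix.add_mul, trace_add, Finset.sum_mul, trace_sum, Matrix.smul_mul,
    trace_smul, hX.2.1, smul_eq_mul, mul_comm]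

theorem exists_dualFeasible_of_forall_le (hSA : StandingAssumptions C Cbar A b) {v : ℝ}
    (hv : ∀ X, PrimalFeasible A b X → v ≤ ((C + ε • Cbar) * X).trace) :
    ∃ y S, DualFeasible C Cbar A ε y S ∧ v ≤ ∑ i, b i * y i := by
  obtain ⟨hC, hCbar, hA, -, X₀, -, -, hX₀, hX₀pd, -, -⟩ := hSA
  obtain ⟨g, hg, hvg⟩ := exists_dual_of_forall_le (K := posSemidefCone (Fin n))
    (Φ := constraintMap A ∘ₗ Submodule.subtype _)
    (d := traceLinearMap _ ℝ ℝ ∘ₗ LinearMap.mulLeft ℝ (C + ε • Cbar) ∘ₗ Submodule.subtype _)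
    (x₀ := ⟨X₀, hX₀pd.isHermitian⟩) hX₀pd.posSemidef
    (exists_smul_add_mem_posSemidefCone hX₀pd) (v := v) fun X hX hΦ =>
      hv X ⟨isHermitian_iff_isSymm.1 hX.isHermitian, fun i => (congrFun hΦ i).trans (hX₀.2.1 i), hX⟩
  obtain ⟨y, hy⟩ : ∃ y : Fin m → ℝ, ∀ w, g w = ∑ i, w i * y i :=
    ⟨_, LinearMap.pi_apply_eq_sum_univ g⟩
  have hS : (C + ε • Cbar - ∑ i, y i • A i).IsSymm := by
    refine (hC.add (hCbar.smul ε)).sub ?_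
    simp only [IsSymm, transpose_sum, transpose_smul, (hA _).eq]
  refine ⟨y, C + ε • Cbar - ∑ i, y i • A i, ⟨hS, add_sub_cancel _ _,
    posSemidef_of_forall_trace_mul_nonneg (isHermitian_iff_isSymm.2 hS) fun X hX => ?_⟩, ?_⟩
  · have hdual : ∑ i, (A i * X).trace * y i ≤ ((C + ε • Cbar) * X).trace :=
      (hy _).symm.trans_le (hg ⟨X, hX.isHermitian⟩ hX)
    simpa only [Matrix.sub_mul, trace_sub, Finset.sum_mul, trace_sum, Matrix.smul_mul, trace_smul,
      smul_eq_mul, mul_comm, sub_nonneg] using hdual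
  · simpa [hy, hX₀.2.1] using hvg

theorem mul_eq_zero_of_mem_primalOpt_of_mem_dualOpt (hSA : StandingAssumptions C Cbar A b)
    (hX : X ∈ PrimalOpt C Cbar A b ε) (hS : (y, S) ∈ DualOpt C Cbar A b ε) : X * S = 0 := by
  obtain ⟨y', S', hS', hle⟩ := exists_dualFeasible_of_forall_le hSA hX.2
  have hgap : (X * S).trace ≤ 0 := by
    linarith [trace_objective_mul hS.1 hX.1, hS.2 y' S' hS', trace_mul_comm X S]
  exact mul_eq_zero_of_trace_mul_eq_zero hX.1.2.2 hS.1.2.2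
    (hgap.antisymm (trace_mul_nonneg_of_posSemidef hX.1.2.2 hS.1.2.2))

theorem mem_primalOpt_and_mem_dualOpt_of_mul_eq_zero (hX : PrimalFeasible A b X)
    (hS : DualFeasible C Cbar A ε y S) (h : X * S = 0) :
    X ∈ PrimalOpt C Cbar A b ε ∧ (y, S) ∈ DualOpt C Cbar A b ε := by
  have hgap : (S * X).trace = 0 := by rw [trace_mul_comm, h, trace_zero]
  refine ⟨⟨hX, fun X' hX' => ?_⟩, ⟨hS, fun y' S' hS' => ?_⟩⟩
  · linarith [trace_objective_mul hS hX, trace_objective_mul hS hX',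
      trace_mul_nonneg_of_posSemidef hS.2.2 hX'.2.2]
  · linarith [trace_objective_mul hS hX, trace_objective_mul hS' hX,
      trace_mul_nonneg_of_posSemidef hS'.2.2 hX.2.2]

theorem exists_dualFeasible_of_mem_Eset (hSA : StandingAssumptions C Cbar A b)
    (hε : ε ∈ Eset C Cbar A b) : ∃ y S, DualFeasible C Cbar A ε y S := by
  obtain ⟨v, -, hv⟩ := EReal.lt_iff_exists_real_btwn.1 hε
  obtain ⟨y, S, hS, -⟩ := exists_dualFeasible_of_forall_le hSA (v := v) fun X hX =>
    EReal.coe_le_coe_iff.1 (hv.le.trans (sInf_le ⟨X, hX, rfl⟩))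
  exact ⟨y, S, hS⟩

theorem dualFeasible_add_smul_sub {ε₁ ε₂ t : ℝ} {y₁ y₂ : Fin m → ℝ}
    {S₁ S₂ : Matrix (Fin n) (Fin n) ℝ} (h₁ : DualFeasible C Cbar A ε₁ y₁ S₁)
    (h₂ : DualFeasible C Cbar A ε₂ y₂ S₂) (hS : (S₁ + t • (S₂ - S₁)).PosSemidef) :
    DualFeasible C Cbar A (ε₁ + t * (ε₂ - ε₁)) (y₁ + t • (y₂ - y₁)) (S₁ + t • (S₂ - S₁)) := by
  refine ⟨isHermitian_iff_isSymm.1 hS.isHermitian, ?_, hS⟩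
  rw [← sub_eq_iff_eq_add'.2 h₁.2.1.symm, ← sub_eq_iff_eq_add'.2 h₂.2.1.symm]
  simp only [Pi.add_apply, Pi.smul_apply, Pi.sub_apply, add_smul, smul_assoc, sub_smul,
    Finset.sum_add_distrib, ← Finset.smul_sum, Finset.sum_sub_distrib]
  module

theorem exists_dualFeasible_posDef (hSA : StandingAssumptions C Cbar A b)
    (hε : ε ∈ interior (Eset C Cbar A b)) : ∃ y S, DualFeasible C Cbar A ε y S ∧ S.PosDef := by
  obtain ⟨-, -, -, -, -, y₀, S₀, -, -, hS₀, hS₀pd⟩ := id hSA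
  have hlim : Filter.Tendsto (fun s : ℝ => ε * (1 + s)) (𝓝[>] 0) (𝓝 ε) :=
    (Continuous.tendsto' (by fun_prop) 0 ε (by simp)).mono_left nhdsWithin_le_nhds
  obtain ⟨s, hsE, hs⟩ := ((hlim.eventually_mem (mem_interior_iff_mem_nhds.1 hε)).and
    (self_mem_nhdsWithin (s := Ioi (0 : ℝ)))).exists
  obtain ⟨y₁, S₁, hS₁⟩ := exists_dualFeasible_of_mem_Eset hSA hsE
  have hs' : 0 < 1 + s := add_pos one_pos hs
  have hpd : (S₀ + (1 + s)⁻¹ • (S₁ - S₀)).PosDef := by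
    have hsplit : S₀ + (1 + s)⁻¹ • (S₁ - S₀) = (s * (1 + s)⁻¹) • S₀ + (1 + s)⁻¹ • S₁ := by
      match_scalars <;> field_simp
      ring
    rw [hsplit]
    exact (hS₀pd.smul (mul_pos hs (inv_pos.2 hs'))).add_posSemidef
      (hS₁.2.2.smul (inv_nonneg.2 hs'.le))
  refine ⟨y₀ + (1 + s)⁻¹ • (y₁ - y₀), _, ?_, hpd⟩
  convert dualFeasible_add_smul_sub hS₀ hS₁ hpd.posSemidef using 1
  field_simp
  ring

theorem exists_eventually_le_trace_objective (hSA : StandingAssumptions C Cbar A b)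
    (hε : ε ∈ interior (Eset C Cbar A b)) :
    ∃ l : ℝ, 0 < l ∧ ∃ c : ℝ, ∀ᶠ e in 𝓝 ε, ∀ X, PrimalFeasible A b X →
      c + l * X.trace ≤ ((C + e • Cbar) * X).trace := by
  obtain ⟨y, S, hS, hSpd⟩ := exists_dualFeasible_posDef hSA hε
  obtain ⟨l, hl, hlS⟩ := exists_pos_mul_trace_le_of_posDef hSpd
  have hlim : Filter.Tendsto (fun e : ℝ => 2 * (e - ε)) (𝓝 ε) (𝓝 0) :=
    Continuous.tendsto' (by fun_prop) ε 0 (by simp)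
  refine ⟨l / 2, half_pos hl, ∑ i, b i * y i, ?_⟩
  filter_upwards [hlim.eventually (eventually_posSemidef_add_smul_of_posDef hSpd
    (isHermitian_iff_isSymm.2 hSA.2.1))] with e he X hX
  have hobj : ((C + e • Cbar) * X).trace =
      ((C + ε • Cbar) * X).trace + (e - ε) * (Cbar * X).trace := by
    simp only [Matrix.add_mul, Matrix.smul_mul, trace_add, trace_smul, smul_eq_mul]
    ring
  have hpert : 0 ≤ (S * X).trace + 2 * (e - ε) * (Cbar * X).trace := by
    simpa only [Matrix.add_mul, Matrix.smul_mul, trace_add, trace_smul, smul_eq_mul] using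
      trace_mul_nonneg_of_posSemidef he hX.2.2
  linarith [hlS X hX.2.2, trace_objective_mul hS hX]

theorem isClosed_setOf_primalFeasible : IsClosed {X | PrimalFeasible A b X} := by
  simp only [PrimalFeasible, ofPred_and, ofPred_forall]
  exact .inter (isClosed_eq (by fun_prop) continuous_id)
    (.inter (isClosed_iInter fun i => isClosed_eq (by fun_prop) continuous_const)
      isClosed_setOf_posSemidef)

theorem primalOpt_nonempty (hSA : StandingAssumptions C Cbar A b)
    (hε : ε ∈ interior (Eset C Cbar A b)) : (PrimalOpt C Cbar A b ε).Nonempty := by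
  obtain ⟨-, -, -, -, X₀, -, -, hX₀, -⟩ := id hSA
  obtain ⟨l, hl, c, hlc⟩ := exists_eventually_le_trace_objective hSA hε
  have hcoer := hlc.self_of_nhds
  set r := (((C + ε • Cbar) * X₀).trace - c) / l with hr
  have hle {X} (hX : PrimalFeasible A b X)
      (h : ((C + ε • Cbar) * X).trace ≤ ((C + ε • Cbar) * X₀).trace) : X.trace ≤ r := by
    rw [hr, le_div_iff₀' hl]
    linarith [hcoer X hX]
  have hcomp : IsCompact ({X | PrimalFeasible A b X} ∩
      {X : Matrix (Fin n) (Fin n) ℝ | X.PosSemidef ∧ X.trace ≤ r}) :=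
    (isCompact_setOf_posSemidef_trace_le r).inter_left isClosed_setOf_primalFeasible
  obtain ⟨X, hX, hmin⟩ := hcomp.exists_isMinOn ⟨X₀, hX₀, hX₀.2.2, hle hX₀ le_rfl⟩
    (f := fun X => ((C + ε • Cbar) * X).trace) (by fun_prop)
  refine ⟨X, hX.1, fun X' hX' => ?_⟩
  obtain h | h := le_total ((C + ε • Cbar) * X').trace ((C + ε • Cbar) * X₀).trace
  · exact hmin ⟨hX', hX'.2.2, hle hX' h⟩
  · exact (hmin ⟨hX₀, hX₀.2.2, hle hX₀ le_rfl⟩).trans h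

theorem dualOpt_nonempty (hSA : StandingAssumptions C Cbar A b)
    (hε : ε ∈ interior (Eset C Cbar A b)) : (DualOpt C Cbar A b ε).Nonempty := by
  obtain ⟨X, hX⟩ := primalOpt_nonempty hSA hε
  obtain ⟨y, S, hS, hle⟩ := exists_dualFeasible_of_forall_le hSA hX.2
  refine ⟨(y, S), hS, fun y' S' hS' => ?_⟩
  linarith [trace_objective_mul hS' hX.1, trace_mul_nonneg_of_posSemidef hS'.2.2 hX.1.2.2]

theorem exists_eventually_trace_le_of_opt (hSA : StandingAssumptions C Cbar A b)
    (hε : ε ∈ interior (Eset C Cbar A b)) :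
    ∃ r : ℝ, ∀ᶠ e in 𝓝 ε, ∀ X ∈ PrimalOpt C Cbar A b e, ∀ y S, (y, S) ∈ DualOpt C Cbar A b e →
      X.trace ≤ r ∧ S.trace ≤ r := by
  obtain ⟨-, -, -, -, X₀, -, -, hX₀, hX₀pd, -⟩ := id hSA
  obtain ⟨l, hl, c, hlc⟩ := exists_eventually_le_trace_objective hSA hε
  obtain ⟨l', hl', hlX₀⟩ := exists_pos_mul_trace_le_of_posDef hX₀pd
  obtain ⟨M, hM⟩ : ∃ M, ∀ᶠ e in 𝓝 ε, ((C + e • Cbar) * X₀).trace ≤ M :=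
    ⟨_, (Continuous.tendsto (by fun_prop) ε).eventually_le_const (lt_add_one _)⟩
  refine ⟨max ((M - c) / l) ((M - c) / l'), ?_⟩
  filter_upwards [hlc, hM] with e hcoer heM X hX y S hS
  have hXtr := mul_nonneg hl.le hX.1.2.2.trace_nonneg
  have hgap : (S * X).trace = 0 := by
    rw [trace_mul_comm, mul_eq_zero_of_mem_primalOpt_of_mem_dualOpt hSA hX hS, trace_zero]
  constructor
  · refine le_max_of_le_left ((le_div_iff₀' hl).2 ?_)
    linarith [hcoer X hX.1, hX.2 X₀ hX₀]
  · refine le_max_of_le_right ((le_div_iff₀' hl').2 ?_)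
    linarith [hcoer X hX.1, hlX₀ S hS.1.2.2, trace_objective_mul hS.1 hX₀,
      trace_objective_mul hS.1 hX.1, trace_mul_comm S X₀]

theorem convex_setOf_forall_le {E : Type*} [AddCommGroup E] [Module ℝ E] {s : Set E}
    (hs : Convex ℝ s) (f : E →ₗ[ℝ] ℝ) : Convex ℝ {x | x ∈ s ∧ ∀ x' ∈ s, f x ≤ f x'} := by
  simp only [ofPred_and, ofPred_forall]
  exact hs.inter (convex_iInter₂ fun x' _ => convex_halfSpace_le f.isLinear (f x'))

theorem convex_primalOpt : Convex ℝ (PrimalOpt C Cbar A b ε) := by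
  refine convex_setOf_forall_le (s := {X | PrimalFeasible A b X})
    (fun X hX Y hY t u ht hu htu => ?_) (traceLinearMap _ ℝ ℝ ∘ₗ LinearMap.mulLeft ℝ (C + ε • Cbar))
  have hXY := (hX.2.2.smul ht).add (hY.2.2.smul hu)
  refine ⟨isHermitian_iff_isSymm.1 hXY.isHermitian, fun i => ?_, hXY⟩
  simp only [Matrix.mul_add, Matrix.mul_smul, trace_add, trace_smul, hX.2.1, hY.2.1, ← add_smul,
    htu, one_smul]

theorem convex_setOf_dualFeasible :
    Convex ℝ {p : (Fin m → ℝ) × Matrix (Fin n) (Fin n) ℝ | DualFeasible C Cbar A ε p.1 p.2} := by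
  refine convex_iff_segment_subset.2 fun p hp q hq => ?_
  rw [segment_eq_image']
  rintro - ⟨t, ht, rfl⟩
  have hpsd : (p.2 + t • (q.2 - p.2)).PosSemidef := by
    convert (hp.2.2.smul (sub_nonneg.2 ht.2)).add (hq.2.2.smul ht.1) using 1
    module
  simpa using dualFeasible_add_smul_sub hp hq hpsd

theorem convex_dualOpt : Convex ℝ (DualOpt C Cbar A b ε) := by
  have hconv := convex_setOf_forall_le (convex_setOf_dualFeasible (C := C) (Cbar := Cbar) (A := A)
    (ε := ε)) (-Fintype.linearCombination ℝ b ∘ₗ LinearMap.fst ℝ _ _)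
  simpa [DualOpt, Fintype.linearCombination_apply, mul_comm] using hconv

open scoped Matrix.Norms.Elementwise in
theorem exists_maxComp (hSA : StandingAssumptions C Cbar A b)
    (hε : ε ∈ interior (Eset C Cbar A b)) : ∃ X y S, MaxComp C Cbar A b ε X y S := by
  obtain ⟨X, hX⟩ := (primalOpt_nonempty hSA hε).intrinsicInterior convex_primalOpt
  obtain ⟨p, hp⟩ := (dualOpt_nonempty hSA hε).intrinsicInterior convex_dualOpt
  exact ⟨X, p.1, p.2, hX, hp⟩

theorem MaxComp.mem_primalOpt (h : MaxComp C Cbar A b ε X y S) : X ∈ PrimalOpt C Cbar A b ε :=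
  intrinsicInterior_subset h.1

theorem MaxComp.mem_dualOpt (h : MaxComp C Cbar A b ε X y S) : (y, S) ∈ DualOpt C Cbar A b ε :=
  intrinsicInterior_subset h.2

end SemidefiniteDuality

section StrictlyComplementaryPairs

variable {𝕜 ι : Type*} [RCLike 𝕜] [Fintype ι] {X S DX DS W : Matrix ι ι 𝕜}

theorem mul_eq_zero_of_mul_add_mul_eq_zero (hX : X.PosSemidef) (hW : W.IsHermitian)
    (h : X * W + W * X = 0) : X * W = 0 := by
  have hXW : X * W = -(W * X) := eq_neg_of_add_eq_zero_left h
  have htr : (X * (W * W)).trace = 0 := by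
    refine self_eq_neg.1 ?_
    calc (X * (W * W)).trace = (X * W * W).trace := by rw [Matrix.mul_assoc]
      _ = -(W * X * W).trace := by rw [hXW, Matrix.neg_mul, trace_neg]
      _ = -(X * (W * W)).trace := by rw [Matrix.mul_assoc, trace_mul_comm, Matrix.mul_assoc]
  have hWW : (W * W).PosSemidef := by
    simpa only [hW.eq] using posSemidef_conjTranspose_mul_self W
  have hXWW := mul_eq_zero_of_trace_mul_eq_zero hX hWW htr
  refine self_mul_conjTranspose_eq_zero.1 ?_
  rw [conjTranspose_mul, hW.eq, hX.isHermitian.eq, Matrix.mul_assoc, ← Matrix.mul_assoc W,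
    ← Matrix.mul_assoc, hXWW, Matrix.zero_mul]

theorem eq_zero_of_mul_eq_zero_of_mul_eq_zero (hpd : (X + S).PosDef) (hX : X * W = 0)
    (hS : S * W = 0) : W = 0 := by
  classical
  exact hpd.isUnit.mul_right_eq_zero.1 (by rw [Matrix.add_mul, hX, hS, add_zero])

theorem eq_zero_of_conjTranspose_mul_mul_eq_zero (hX : X.PosDef) (h : Wᴴ * X * W = 0) :
    W = 0 := by
  classical
  obtain ⟨R, rfl⟩ := exists_eq_conjTranspose_mul_self_of_posSemidef hX.posSemidef
  have hRW : R * W = 0 := conjTranspose_mul_self_eq_zero.1 <| by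
    simpa only [conjTranspose_mul, Matrix.mul_assoc] using h
  exact hX.isUnit.mul_right_eq_zero.1 (by rw [Matrix.mul_assoc, hRW, Matrix.mul_zero])

theorem mul_mul_self_eq_zero_of_posDef_add (hX : X.PosSemidef) (hS : S.IsHermitian)
    (hXS : X * S = 0) (hpd : (X + S).PosDef) (hDS : DS.IsHermitian)
    (h : DX * S + S * DX + X * DS + DS * X = 0) : X * DS * X = 0 := by
  have hSX := mul_eq_zero_symm_of_isHermitian hX.isHermitian hS hXS
  have hHerm : (X * DS * X).IsHermitian := by
    simpa only [hX.isHermitian.eq] using isHermitian_mul_mul_conjTranspose X hDS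
  refine eq_zero_of_mul_eq_zero_of_mul_eq_zero hpd
    (mul_eq_zero_of_mul_add_mul_eq_zero hX hHerm ?_) ?_
  · calc X * (X * DS * X) + X * DS * X * X
        = X * (DX * S + S * DX + X * DS + DS * X) * X
          - X * DX * (S * X) - X * S * DX * X := by noncomm_ring
      _ = 0 := by simp only [h, hSX, hXS, Matrix.mul_zero, Matrix.zero_mul, sub_zero]
  · simp only [← Matrix.mul_assoc, hSX, Matrix.zero_mul]

theorem mul_add_mul_eq_zero_of_posDef_add (hX : X.PosSemidef) (hS : S.PosSemidef)
    (hXS : X * S = 0) (hpd : (X + S).PosDef) (hDX : DX.IsHermitian) (hDS : DS.IsHermitian)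
    (h : DX * S + S * DX + X * DS + DS * X = 0) : DX * S + X * DS = 0 := by
  have hSX := mul_eq_zero_symm_of_isHermitian hX.isHermitian hS.isHermitian hXS
  have hX' := mul_mul_self_eq_zero_of_posDef_add hX hS.isHermitian hXS hpd hDS h
  have hS' := mul_mul_self_eq_zero_of_posDef_add (DX := DS) hS hX.isHermitian hSX
    (by rwa [add_comm]) hDX (by rw [← h]; abel)
  refine eq_zero_of_mul_eq_zero_of_mul_eq_zero hpd ?_ ?_
  · calc X * (DX * S + X * DS)
        = X * (DX * S + S * DX + X * DS + DS * X) - X * S * DX - X * DS * X := by noncomm_ring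
      _ = 0 := by simp only [h, hXS, hX', Matrix.mul_zero, Matrix.zero_mul, sub_zero]
  · calc S * (DX * S + X * DS) = S * DX * S + S * X * DS := by noncomm_ring
      _ = 0 := by simp only [hS', hSX, Matrix.zero_mul, add_zero]

theorem mul_eq_neg_of_mul_add_mul_eq_zero [DecidableEq ι] {G : Matrix ι ι 𝕜}
    (hG : (X + S) * G = 1) (hGX : G * X = X * G) (h : DX * S + X * DS = 0) :
    DX * DS = -(DX * G * DX * S + X * (DS * G * DS)) := by
  calc DX * DS = DX * ((X + S) * G) * DS := by rw [hG, Matrix.mul_one]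
    _ = DX * (X * G) * DS + DX * S * G * DS := by noncomm_ring
    _ = DX * G * (X * DS) + DX * S * (G * DS) := by rw [← hGX]; noncomm_ring
    _ = DX * G * -(DX * S) + -(X * DS) * (G * DS) :=
      congrArg₂ (DX * G * · + · * (G * DS)) (eq_neg_of_add_eq_zero_right h)
        (eq_neg_of_add_eq_zero_left h)
    _ = _ := by noncomm_ring

theorem mul_eq_zero_and_mul_eq_zero_of_posDef_add (hX : X.PosSemidef) (hS : S.PosSemidef)
    (hXS : X * S = 0) (hpd : (X + S).PosDef) (hDX : DX.IsHermitian) (hDS : DS.IsHermitian)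
    (htr : (DX * DS).trace = 0) (h : DX * S + S * DX + X * DS + DS * X = 0) :
    DX * S = 0 ∧ X * DS = 0 := by
  classical
  have hK := mul_add_mul_eq_zero_of_posDef_add hX hS hXS hpd hDX hDS h
  have hcomm : Commute (X + S) X := by
    rw [Commute, SemiconjBy, Matrix.add_mul, Matrix.mul_add, hXS,
      mul_eq_zero_symm_of_isHermitian hX.isHermitian hS.isHermitian hXS]
  obtain ⟨G, hG, hXSG, hGX⟩ : ∃ G : Matrix ι ι 𝕜, G.PosDef ∧ (X + S) * G = 1 ∧ G * X = X * G := by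
    obtain ⟨u, hu⟩ := hpd.isUnit
    rw [← hu] at hcomm hpd ⊢
    exact ⟨↑u⁻¹, coe_units_inv u ▸ hpd.inv, u.mul_inv, hcomm.units_inv_left⟩
  have hsplit := mul_eq_neg_of_mul_add_mul_eq_zero hXSG hGX hK
  have hDXG : (DX * G * DX).PosSemidef := by
    simpa only [hDX.eq] using hG.posSemidef.mul_mul_conjTranspose_same DX
  have hDSG : (DS * G * DS).PosSemidef := by
    simpa only [hDS.eq] using hG.posSemidef.mul_mul_conjTranspose_same DS
  have htr' : (DX * G * DX * S).trace = 0 := by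
    rw [hsplit, trace_neg, neg_eq_zero, trace_add] at htr
    exact ((add_eq_zero_iff_of_nonneg (trace_mul_nonneg_of_posSemidef hDXG hS)
      (trace_mul_nonneg_of_posSemidef hX hDSG)).1 htr).1
  have hDXS : DX * S = 0 := by
    refine eq_zero_of_conjTranspose_mul_mul_eq_zero hG ?_
    have := mul_eq_zero_of_trace_mul_eq_zero hDXG hS htr'
    rw [conjTranspose_mul, hDX.eq, Matrix.mul_assoc, Matrix.mul_assoc, ← Matrix.mul_assoc G,
      ← Matrix.mul_assoc DX, ← Matrix.mul_assoc DX, this, Matrix.mul_zero]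
  exact ⟨hDXS, by rwa [hDXS, zero_add] at hK⟩

theorem eventually_posSemidef_add_smul_of_mul_eq_zero (hX : X.PosSemidef) (hXS : X * S = 0)
    (hpd : (X + S).PosDef) (hDX : DX.IsHermitian) (h : DX * S = 0) :
    ∀ᶠ t in 𝓝 (0 : ℝ), (X + t • DX).PosSemidef := by
  classical
  refine eventually_posSemidef_add_smul hX hDX fun v hv => ?_
  obtain ⟨w, rfl⟩ := mulVec_surjective_iff_isUnit.2 hpd.isUnit v
  have hXw : X *ᵥ w = 0 := by
    refine (conjTranspose_mul_self_mulVec_eq_zero X w).1 ?_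
    rw [← hv, hX.isHermitian.eq, mulVec_mulVec, Matrix.mul_add, hXS, add_zero]
  rw [add_mulVec, hXw, zero_add, mulVec_mulVec, h, zero_mulVec]

end StrictlyComplementaryPairs

section Jacobian

variable {n m : ℕ} {C Cbar : Matrix (Fin n) (Fin n) ℝ} {A : Fin m → Matrix (Fin n) (Fin n) ℝ}
  {b : Fin m → ℝ} {ε : ℝ} {X S : Matrix (Fin n) (Fin n) ℝ} {y : Fin m → ℝ}

theorem range_eq_of_injective_of_range_le {K V W : Type*} [DivisionRing K] [AddCommGroup V]
    [Module K V] [AddCommGroup W] [Module K W] [FiniteDimensional K V] {f g : V →ₗ[K] W}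
    (hf : Function.Injective f) (hg : Function.Injective g)
    (h : LinearMap.range f ≤ LinearMap.range g) : LinearMap.range f = LinearMap.range g :=
  Submodule.eq_of_le_of_finrank_eq h <| by
    rw [LinearMap.finrank_range_of_inj hf, LinearMap.finrank_range_of_inj hg]

/-- The Jacobian `J(X, y, S)` of the optimality system as a linear map out of `ℝ^m × S^n × S^n`,
the variables being ordered `(Δy, ΔX, ΔS)` so that the symmetric triples in the codomain are a copy
of the domain. The symmetrized product is not halved, which changes neither kernel nor range. -/
def jacobian (A : Fin m → Matrix (Fin n) (Fin n) ℝ) (X S : Matrix (Fin n) (Fin n) ℝ) :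
    (Fin m → ℝ) × selfAdjoint.submodule ℝ (Matrix (Fin n) (Fin n) ℝ) ×
        selfAdjoint.submodule ℝ (Matrix (Fin n) (Fin n) ℝ) →ₗ[ℝ]
      (Fin m → ℝ) × Matrix (Fin n) (Fin n) ℝ × Matrix (Fin n) (Fin n) ℝ where
  toFun p := (constraintMap A p.2.1, ∑ i, p.1 i • A i + p.2.2,
    p.2.1 * S + S * p.2.1 + X * p.2.2 + p.2.2 * X)
  map_add' p q := by
    simp only [Prod.fst_add, Prod.snd_add, Submodule.coe_add, map_add, Pi.add_apply, add_smul,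
      Finset.sum_add_distrib, Matrix.add_mul, Matrix.mul_add, Prod.mk_add_mk]
    congr 2 <;> abel
  map_smul' t p := by
    simp [Finset.smul_sum, smul_smul]

theorem jNonsingular_iff_injective_jacobian :
    JNonsingular A X S ↔ Function.Injective (jacobian A X S) := by
  rw [injective_iff_map_eq_zero]
  constructor
  · rintro hJ ⟨Dy, ⟨DX, hDX⟩, DS, hDS⟩ h
    obtain ⟨h₁, h₂, h₃⟩ : constraintMap A DX = 0 ∧ ∑ i, Dy i • A i + DS = 0 ∧
      DX * S + S * DX + X * DS + DS * X = 0 := by simpa [jacobian] using h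
    obtain ⟨rfl, rfl, rfl⟩ := hJ DX DS Dy (isHermitian_iff_isSymm.1 hDX)
      (isHermitian_iff_isSymm.1 hDS) (congrFun h₁) h₂ h₃
    rfl
  · intro hJ DX DS Dy hDX hDS h₁ h₂ h₃
    obtain ⟨hy, hX, hS⟩ : Dy = 0 ∧ DX = 0 ∧ DS = 0 := by
      simpa [Subtype.ext_iff] using
        hJ (Dy, ⟨DX, isHermitian_iff_isSymm.2 hDX⟩, ⟨DS, isHermitian_iff_isSymm.2 hDS⟩)
          (Prod.ext (funext h₁) (Prod.ext h₂ h₃))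
    exact ⟨hX, hy, hS⟩

theorem range_jacobian_le (hA : ∀ i, (A i).IsSymm) (hX : X.IsHermitian) (hS : S.IsHermitian) :
    LinearMap.range (jacobian A X S) ≤ LinearMap.range ((LinearMap.id (M := Fin m → ℝ)).prodMap
      ((selfAdjoint.submodule ℝ _).subtype.prodMap (selfAdjoint.submodule ℝ _).subtype)) := by
  rintro - ⟨⟨Dy, ⟨DX, hDX⟩, DS, hDS⟩, rfl⟩
  have hΨ : (∑ i, Dy i • A i).IsHermitian := isHermitian_iff_isSymm.2 (by
    simp only [IsSymm, transpose_sum, transpose_smul, (hA _).eq])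
  refine ⟨(constraintMap A DX, ⟨_, hΨ.add hDS⟩, ⟨DX * S + S * DX + X * DS + DS * X, ?_⟩), rfl⟩
  change (DX * S + S * DX + X * DS + DS * X)ᴴ = DX * S + S * DX + X * DS + DS * X
  simp only [conjTranspose_add, conjTranspose_mul, hX.eq, hS.eq, IsHermitian.eq hDX,
    IsHermitian.eq hDS]
  abel

theorem JNonsingular.mem_range_jacobian (hJ : JNonsingular A X S) (hA : ∀ i, (A i).IsSymm)
    (hX : X.IsHermitian) (hS : S.IsHermitian) {M : Matrix (Fin n) (Fin n) ℝ} (hM : M.IsHermitian) :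
    (0, 0, M) ∈ LinearMap.range (jacobian A X S) := by
  rw [range_eq_of_injective_of_range_le (jNonsingular_iff_injective_jacobian.1 hJ) ?_
    (range_jacobian_le hA hX hS)]
  · exact ⟨(0, 0, ⟨M, hM⟩), rfl⟩
  · exact Function.injective_id.prodMap (Subtype.val_injective.prodMap Subtype.val_injective)

theorem JNonsingular.posDef_add (hJ : JNonsingular A X S) (hA : ∀ i, (A i).IsSymm)
    (hX : X.PosSemidef) (hS : S.PosSemidef) : (X + S).PosDef := by
  refine (posDef_add_iff_forall_mulVec hX hS).2 fun x hXx hSx => ?_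
  obtain ⟨⟨Dy, DX, DS⟩, h⟩ := hJ.mem_range_jacobian hA hX.isHermitian hS.isHermitian
    (posSemidef_vecMulVec_self_star x).isHermitian
  have hxX : x ᵥ* X = 0 := by
    rw [← hXx, ← mulVec_transpose, (isHermitian_iff_isSymm.1 hX.isHermitian).eq]
  have hxS : x ᵥ* S = 0 := by
    rw [← hSx, ← mulVec_transpose, (isHermitian_iff_isSymm.1 hS.isHermitian).eq]
  have hquad : x ⬝ᵥ (vecMulVec x (star x) *ᵥ x) = 0 := by
    rw [← (Prod.mk.inj (Prod.mk.inj h).2).2]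
    simp [add_mulVec, ← mulVec_mulVec, hXx, hSx, dotProduct_mulVec x X, dotProduct_mulVec x S,
      hxX, hxS]
  simpa [vecMulVec_mulVec] using hquad

theorem eq_and_eq_of_jNonsingular (hSA : StandingAssumptions C Cbar A b)
    {X' S' : Matrix (Fin n) (Fin n) ℝ} {y' : Fin m → ℝ} (hJ : JNonsingular A X S)
    (hX : X ∈ PrimalOpt C Cbar A b ε) (hS : (y, S) ∈ DualOpt C Cbar A b ε)
    (hX' : X' ∈ PrimalOpt C Cbar A b ε) (hS' : (y', S') ∈ DualOpt C Cbar A b ε) :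
    X' = X ∧ S' = S := by
  have hcomp {Y T : Matrix (Fin n) (Fin n) ℝ} {z : Fin m → ℝ} (hY : Y ∈ PrimalOpt C Cbar A b ε)
      (hT : (z, T) ∈ DualOpt C Cbar A b ε) : Y * T = 0 ∧ T * Y = 0 := by
    have h := mul_eq_zero_of_mem_primalOpt_of_mem_dualOpt hSA hY hT
    exact ⟨h, mul_eq_zero_symm_of_isHermitian hY.1.2.2.isHermitian hT.1.2.2.isHermitian h⟩
  constructor
  · have := hJ (X' - X) 0 0 (hX'.1.1.sub hX.1.1) isSymm_zero
      (fun i => by rw [Matrix.mul_sub, trace_sub, hX.1.2.1, hX'.1.2.1, sub_self]) (by simp)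
      (by simp [Matrix.mul_sub, Matrix.sub_mul, hcomp hX hS, hcomp hX' hS])
    exact sub_eq_zero.1 this.1
  · have hsum : ∑ i, (y' - y) i • A i + (S' - S) = 0 := by
      simp only [Pi.sub_apply, sub_smul, Finset.sum_sub_distrib]
      rw [sub_add_sub_comm, sub_eq_zero]
      exact hS'.1.2.1.trans hS.1.2.1.symm
    have := hJ 0 (S' - S) (y' - y) isSymm_zero (hS'.1.1.sub hS.1.1) (by simp) hsum
      (by simp [Matrix.mul_sub, Matrix.sub_mul, hcomp hX hS, hcomp hX hS'])
    exact sub_eq_zero.1 this.2.2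

open scoped Matrix.Norms.Elementwise in
theorem isOpen_setOf_jNonsingular :
    IsOpen {p : Matrix (Fin n) (Fin n) ℝ × Matrix (Fin n) (Fin n) ℝ | JNonsingular A p.1 p.2} := by
  have hcont : Continuous fun p : Matrix (Fin n) (Fin n) ℝ × Matrix (Fin n) (Fin n) ℝ =>
      LinearMap.toContinuousLinearMap (jacobian A p.1 p.2) := by
    refine continuous_clm_apply.2 fun q => ?_
    change Continuous fun p : Matrix (Fin n) (Fin n) ℝ × Matrix (Fin n) (Fin n) ℝ =>
      (constraintMap A q.2.1, ∑ i, q.1 i • A i + q.2.2.1,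
        q.2.1.1 * p.2 + p.2 * q.2.1 + p.1 * q.2.2 + q.2.2.1 * p.1)
    fun_prop
  simp only [jNonsingular_iff_injective_jacobian]
  exact ContinuousLinearMap.isOpen_injective.preimage hcont

theorem add_smul_mem_primalOpt {DX : Matrix (Fin n) (Fin n) ℝ} {t : ℝ} (hX : PrimalFeasible A b X)
    (hS : DualFeasible C Cbar A ε y S) (hXS : X * S = 0) (hADX : ∀ i, (A i * DX).trace = 0)
    (hDXS : DX * S = 0) (hpsd : (X + t • DX).PosSemidef) : X + t • DX ∈ PrimalOpt C Cbar A b ε := by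
  refine (mem_primalOpt_and_mem_dualOpt_of_mul_eq_zero
    ⟨isHermitian_iff_isSymm.1 hpsd.isHermitian, fun i => ?_, hpsd⟩ hS ?_).1
  · rw [Matrix.mul_add, Matrix.mul_smul, trace_add, trace_smul, hADX, hX.2.1, smul_zero, add_zero]
  · rw [Matrix.add_mul, Matrix.smul_mul, hXS, hDXS, smul_zero, add_zero]

theorem add_smul_mem_dualOpt {DS : Matrix (Fin n) (Fin n) ℝ} {Dy : Fin m → ℝ} {t : ℝ}
    (hX : PrimalFeasible A b X) (hS : DualFeasible C Cbar A ε y S) (hXS : X * S = 0)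
    (hADS : ∑ i, Dy i • A i + DS = 0) (hXDS : X * DS = 0) (hpsd : (S + t • DS).PosSemidef) :
    (y + t • Dy, S + t • DS) ∈ DualOpt C Cbar A b ε := by
  refine (mem_primalOpt_and_mem_dualOpt_of_mul_eq_zero hX
    ⟨isHermitian_iff_isSymm.1 hpsd.isHermitian, ?_, hpsd⟩ ?_).2
  · have hsum : ∑ i, (y + t • Dy) i • A i = ∑ i, y i • A i + t • ∑ i, Dy i • A i := by
      simp only [Pi.add_apply, Pi.smul_apply, smul_eq_mul, add_smul, Finset.sum_add_distrib,
        Finset.smul_sum, smul_smul]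
    rw [hsum, add_add_add_comm, ← smul_add, hADS, smul_zero, add_zero, hS.2.1]
  · rw [Matrix.mul_add, Matrix.mul_smul, hXS, hXDS, smul_zero, add_zero]

theorem jNonsingular_of_posDef_add (hSA : StandingAssumptions C Cbar A b)
    (hP : (PrimalOpt C Cbar A b ε).Subsingleton) (hD : (DualOpt C Cbar A b ε).Subsingleton)
    (hX : X ∈ PrimalOpt C Cbar A b ε) (hS : (y, S) ∈ DualOpt C Cbar A b ε)
    (hpd : (X + S).PosDef) : JNonsingular A X S := by
  have hXS := mul_eq_zero_of_mem_primalOpt_of_mem_dualOpt hSA hX hS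
  have hSX := mul_eq_zero_symm_of_isHermitian hX.1.2.2.isHermitian hS.1.2.2.isHermitian hXS
  intro DX DS Dy hDX hDS h₁ h₂ h₃
  rw [← isHermitian_iff_isSymm] at hDX hDS
  have htr : (DX * DS).trace = 0 := by
    rw [trace_mul_comm, eq_neg_of_add_eq_zero_right h₂, Matrix.neg_mul, trace_neg, Finset.sum_mul,
      trace_sum]
    simp only [Matrix.smul_mul, trace_smul, h₁, smul_zero, Finset.sum_const_zero, neg_zero]
  obtain ⟨hDXS, hXDS⟩ :=
    mul_eq_zero_and_mul_eq_zero_of_posDef_add hX.1.2.2 hS.1.2.2 hXS hpd hDX hDS htr h₃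
  have hDSX := mul_eq_zero_symm_of_isHermitian hX.1.2.2.isHermitian hDS hXDS
  obtain ⟨t, ⟨hXt, hSt⟩, ht⟩ := ((((eventually_posSemidef_add_smul_of_mul_eq_zero hX.1.2.2 hXS hpd
    hDX hDXS).and (eventually_posSemidef_add_smul_of_mul_eq_zero hS.1.2.2 hSX
      (by rwa [add_comm]) hDS hDSX)).filter_mono nhdsWithin_le_nhds).and
    (self_mem_nhdsWithin (s := Ioi (0 : ℝ)))).exists
  have hDX0 : t • DX = 0 :=
    add_eq_left.1 (hP (add_smul_mem_primalOpt hX.1 hS.1 hXS h₁ hDXS hXt) hX)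
  obtain ⟨hDy0, hDS0⟩ := Prod.mk.inj (hD (add_smul_mem_dualOpt hX.1 hS.1 hXS h₂ hXDS hSt) hS)
  exact ⟨(smul_eq_zero.1 hDX0).resolve_left (ne_of_gt ht),
    (smul_eq_zero.1 (add_eq_left.1 hDy0)).resolve_left (ne_of_gt ht),
    (smul_eq_zero.1 (add_eq_left.1 hDS0)).resolve_left (ne_of_gt ht)⟩

end Jacobian

section RegularParameter

theorem notMem_frontier_of_forall_superset_eq {α : Type*} [TopologicalSpace α]
    [LocallyConnectedSpace α] {I : Set α} {Q : α → Prop} {x : α} (hI : IsOpen I)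
    (hIconn : IsPreconnected I) (hQ : ∀ y ∈ I, Q y)
    (hmax : ∀ J, I ⊆ J → IsOpen J → IsPreconnected J → (∀ y ∈ J, Q y) → J = I)
    (hx : ∀ᶠ y in 𝓝 x, Q y) : x ∉ frontier I := by
  rw [hI.frontier_eq]
  rintro ⟨hcl, hxI⟩
  obtain ⟨V, ⟨hV, hxV, hVconn⟩, hQV⟩ :=
    (LocallyConnectedSpace.open_connected_basis x).eventually_iff.1 hx
  obtain ⟨z, hzV, hzI⟩ := mem_closure_iff.1 hcl V hV hxV
  have hIV : I ∪ V = I := hmax (I ∪ V) subset_union_left (hI.union hV)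
    (hIconn.union z hzI hzV hVconn.isPreconnected) fun y hy => hy.elim (hQ y) (hQV ·)
  exact hxI (hIV ▸ Or.inr hxV)

theorem eventually_forall_mem_of_isClosed {α β : Type*} [TopologicalSpace α] [TopologicalSpace β]
    {K U : Set β} {G : Set (α × β)} {x₀ : α} (hK : IsCompact K) (hG : IsClosed G) (hU : IsOpen U)
    (h : ∀ y ∈ K, (x₀, y) ∈ G → y ∈ U) : ∀ᶠ x in 𝓝 x₀, ∀ y ∈ K, (x, y) ∈ G → y ∈ U :=
  hK.eventually_forall_of_forall_eventually fun y hy => by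
    have hopen : IsOpen (Gᶜ ∪ Prod.snd ⁻¹' U) := hG.isOpen_compl.union (hU.preimage continuous_snd)
    exact (hopen.eventually_mem (imp_iff_not_or.1 (h y hy))).mono fun _ => imp_iff_not_or.2

variable {n m : ℕ} {C Cbar : Matrix (Fin n) (Fin n) ℝ} {A : Fin m → Matrix (Fin n) (Fin n) ℝ}
  {b : Fin m → ℝ} {ε εbar : ℝ} {X S : Matrix (Fin n) (Fin n) ℝ} {y : Fin m → ℝ}

/-- A parameter is regular if the Jacobian of the optimality system is nonsingular at some
maximally complementary solution; these are the parameters that make up `I_reg`. -/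
def IsRegularParameter (C Cbar : Matrix (Fin n) (Fin n) ℝ)
    (A : Fin m → Matrix (Fin n) (Fin n) ℝ) (b : Fin m → ℝ) (ε : ℝ) : Prop :=
  ∃ X S y, MaxComp C Cbar A b ε X y S ∧ JNonsingular A X S

theorem IsRegularParameter.posDef_add (h : IsRegularParameter C Cbar A b ε)
    (hSA : StandingAssumptions C Cbar A b) (hX : X ∈ PrimalOpt C Cbar A b ε)
    (hS : (y, S) ∈ DualOpt C Cbar A b ε) : (X + S).PosDef := by
  obtain ⟨X₀, S₀, y₀, hmc, hJ⟩ := h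
  obtain ⟨rfl, rfl⟩ :=
    eq_and_eq_of_jNonsingular hSA hJ hmc.mem_primalOpt hmc.mem_dualOpt hX hS
  exact hJ.posDef_add hSA.2.2.1 hX.1.2.2 hS.1.2.2

theorem hasStrictComp_of_samePartition (hSA : StandingAssumptions C Cbar A b)
    (hreg : ∃ᶠ e in 𝓝 εbar, IsRegularParameter C Cbar A b e) (hne : ε ≠ εbar)
    (h : SamePartition C Cbar A b ε εbar) : HasStrictComp C Cbar A b εbar := by
  obtain ⟨X, y, S, X', y', S', hmc, hmc', hrX, hrS⟩ := h
  have hX := hmc.mem_primalOpt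
  have hS := hmc.mem_dualOpt
  have hX' := hmc'.mem_primalOpt
  have hS' := hmc'.mem_dualOpt
  have hkerX (x : Fin n → ℝ) : X' *ᵥ x = 0 → X *ᵥ x = 0 :=
    mulVec_eq_zero_of_range_le hX.1.2.2.isHermitian hX'.1.2.2.isHermitian hrX.le
  have hkerS (x : Fin n → ℝ) : S' *ᵥ x = 0 → S *ᵥ x = 0 :=
    mulVec_eq_zero_of_range_le hS.1.2.2.isHermitian hS'.1.2.2.isHermitian hrS.le
  have hXS := mul_eq_zero_of_mem_primalOpt_of_mem_dualOpt hSA hX hS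
  have hXS' : X * S' = 0 := by
    obtain ⟨W, rfl⟩ := exists_eq_mul_of_range_le hrS.ge
    rw [← Matrix.mul_assoc, hXS, Matrix.zero_mul]
  have hlim : Filter.Tendsto (fun e => (e - εbar) / (ε - εbar)) (𝓝 εbar) (𝓝 0) := by
    have : Continuous fun e => (e - εbar) / (ε - εbar) := by fun_prop
    simpa using this.tendsto εbar
  -- The segment from `S'` to `S`, prolonged a little beyond `S'`, consists of dual slacks that
  -- are complementary to `X`, and it reaches the regular parameters near `εbar`.
  obtain ⟨e, he, hpsd⟩ := (hreg.and_eventually (hlim.eventually (eventually_posSemidef_add_smul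
    hS'.1.2.2 (hS.1.2.2.isHermitian.sub hS'.1.2.2.isHermitian) fun x hx => by
      rw [sub_mulVec, hkerS x hx, hx, sub_zero]))).exists
  have hfeas := dualFeasible_add_smul_sub hS'.1 hS.1 hpsd
  rw [div_mul_cancel₀ _ (sub_ne_zero.2 hne), add_sub_cancel] at hfeas
  obtain ⟨hXe, hSe⟩ := mem_primalOpt_and_mem_dualOpt_of_mul_eq_zero hX.1 hfeas
    (by rw [Matrix.mul_add, Matrix.mul_smul, Matrix.mul_sub, hXS, hXS', sub_zero, smul_zero,
      add_zero])
  have hpd := (posDef_add_iff_forall_mulVec hX.1.2.2 hpsd).1 (he.posDef_add hSA hXe hSe)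
  refine ⟨X', y', S', hX', hS', (posDef_add_iff_forall_mulVec hX'.1.2.2 hS'.1.2.2).2
    fun x hxX hxS => hpd x (hkerX x hxX) ?_⟩
  rw [add_mulVec, smul_mulVec, sub_mulVec, hxS, hkerS x hxS, sub_zero, smul_zero, add_zero]

theorem hasStrictComp_of_dimsMatch (hSA : StandingAssumptions C Cbar A b)
    (hεbar : εbar ∈ interior (Eset C Cbar A b)) (hreg : IsRegularParameter C Cbar A b ε)
    (h : DimsMatch C Cbar A b ε εbar) : HasStrictComp C Cbar A b εbar := by
  obtain ⟨X, S, y, hmc, -⟩ := id hreg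
  obtain ⟨X', y', S', hmc'⟩ := exists_maxComp hSA hεbar
  have hX' := hmc'.mem_primalOpt
  have hS' := hmc'.mem_dualOpt
  obtain ⟨hrX, hrS⟩ := h _ _ _ _ _ _ hmc hmc'
  have hcard := card_le_rank_add_rank_of_posDef_add
    (hreg.posDef_add hSA hmc.mem_primalOpt hmc.mem_dualOpt)
  rw [Matrix.rank, Matrix.rank, hrX, hrS] at hcard
  exact ⟨X', y', S', hX', hS', posDef_add_of_card_le_rank_add_rank hX'.1.2.2 hS'.1.2.2
    (mul_eq_zero_of_mem_primalOpt_of_mem_dualOpt hSA hX' hS') hcard⟩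

theorem isTransitionPoint_of_frequently_isRegularParameter (hSA : StandingAssumptions C Cbar A b)
    (hεbar : εbar ∈ interior (Eset C Cbar A b))
    (hreg : ∃ᶠ e in 𝓝 εbar, IsRegularParameter C Cbar A b e)
    (hsc : ¬ HasStrictComp C Cbar A b εbar) : IsTransitionPoint C Cbar A b εbar := by
  refine ⟨hεbar, fun ε _ hne h => hsc (hasStrictComp_of_samePartition hSA hreg hne h),
    fun ξ hξ => ?_⟩
  have hnear : Ioo (εbar - ξ) (εbar + ξ) ∩ interior (Eset C Cbar A b) ∈ 𝓝 εbar :=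
    Filter.inter_mem (Ioo_mem_nhds (sub_lt_self _ hξ) (lt_add_of_pos_right _ hξ))
      (isOpen_interior.mem_nhds hεbar)
  obtain ⟨e, he, hmem⟩ := (hreg.and_eventually hnear).exists
  exact ⟨e, hmem, fun h => hsc (hasStrictComp_of_dimsMatch hSA hεbar he h)⟩

theorem isClosed_setOf_opt (hSA : StandingAssumptions C Cbar A b) :
    IsClosed {q : ℝ × Matrix (Fin n) (Fin n) ℝ × Matrix (Fin n) (Fin n) ℝ |
      q.2.1 ∈ PrimalOpt C Cbar A b q.1 ∧ ∃ y, (y, q.2.2) ∈ DualOpt C Cbar A b q.1} := by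
  have hiff (q : ℝ × Matrix (Fin n) (Fin n) ℝ × Matrix (Fin n) (Fin n) ℝ) :
      (q.2.1 ∈ PrimalOpt C Cbar A b q.1 ∧ ∃ y, (y, q.2.2) ∈ DualOpt C Cbar A b q.1) ↔
        PrimalFeasible A b q.2.1 ∧ q.2.2.PosSemidef ∧
          C + q.1 • Cbar - q.2.2 ∈ LinearMap.range (Fintype.linearCombination ℝ A) ∧
          q.2.1 * q.2.2 = 0 := by
    constructor
    · rintro ⟨hX, y, hS⟩
      exact ⟨hX.1, hS.1.2.2, ⟨y, eq_sub_of_add_eq hS.1.2.1⟩,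
        mul_eq_zero_of_mem_primalOpt_of_mem_dualOpt hSA hX hS⟩
    · rintro ⟨hX, hS, ⟨y, hy⟩, hXS⟩
      obtain ⟨hX', hS'⟩ := mem_primalOpt_and_mem_dualOpt_of_mul_eq_zero hX
        ⟨isHermitian_iff_isSymm.1 hS.isHermitian, add_eq_of_eq_sub hy, hS⟩ hXS
      exact ⟨hX', y, hS'⟩
  simp only [hiff, ofPred_and]
  exact .inter (isClosed_setOf_primalFeasible.preimage (by fun_prop))
    (.inter (isClosed_setOf_posSemidef.preimage (by fun_prop))
      (.inter ((Submodule.closed_of_finiteDimensional _).preimage (by fun_prop))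
        (isClosed_eq (by fun_prop) continuous_const)))

theorem eventually_jNonsingular_of_forall_opt (hSA : StandingAssumptions C Cbar A b)
    (hε : ε ∈ interior (Eset C Cbar A b))
    (hJ : ∀ X ∈ PrimalOpt C Cbar A b ε, ∀ y S, (y, S) ∈ DualOpt C Cbar A b ε → JNonsingular A X S) :
    ∀ᶠ e in 𝓝 ε, ∀ X ∈ PrimalOpt C Cbar A b e, ∀ y S, (y, S) ∈ DualOpt C Cbar A b e →
      JNonsingular A X S := by
  obtain ⟨r, hr⟩ := exists_eventually_trace_le_of_opt hSA hε
  have hK := (isCompact_setOf_posSemidef_trace_le (ι := Fin n) r).prod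
    (isCompact_setOf_posSemidef_trace_le (ι := Fin n) r)
  have hloc := eventually_forall_mem_of_isClosed hK (isClosed_setOf_opt hSA)
    (isOpen_setOf_jNonsingular (A := A)) (x₀ := ε) fun p _ ⟨hX, y, hS⟩ => hJ _ hX y _ hS
  filter_upwards [hr, hloc] with e hre hloce X hX y S hS
  obtain ⟨hXr, hSr⟩ := hre X hX y S hS
  exact hloce (X, S) ⟨⟨hX.1.2.2, hXr⟩, hS.1.2.2, hSr⟩ ⟨hX, y, hS⟩

theorem eventually_isRegularParameter (hSA : StandingAssumptions C Cbar A b)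
    (hε : ε ∈ interior (Eset C Cbar A b)) (hP : (PrimalOpt C Cbar A b ε).Subsingleton)
    (hD : (DualOpt C Cbar A b ε).Subsingleton) (hsc : HasStrictComp C Cbar A b ε) :
    ∀ᶠ e in 𝓝 ε, IsRegularParameter C Cbar A b e := by
  obtain ⟨X₀, y₀, S₀, hX₀, hS₀, hpd⟩ := hsc
  have hJ₀ := jNonsingular_of_posDef_add hSA hP hD hX₀ hS₀ hpd
  have hJ := eventually_jNonsingular_of_forall_opt hSA hε fun X hX y S hS => by
    obtain ⟨-, rfl⟩ := Prod.mk.inj (hD hS hS₀)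
    rwa [hP hX hX₀]
  filter_upwards [hJ, isOpen_interior.mem_nhds hε] with e hJe he
  obtain ⟨X, y, S, hmc⟩ := exists_maxComp hSA he
  exact ⟨X, S, y, hmc, hJe X hmc.mem_primalOpt y S hmc.mem_dualOpt⟩

end RegularParameter

/-- a boundary point of a maximal interval of nonsingularity of the Jacobian at
maximally complementary solutions is a transition point when strict complementarity fails
there; in particular this holds when both optimal sets are singletons. -/
theorem stmt7 {n m : ℕ} (C Cbar : Matrix (Fin n) (Fin n) ℝ)
    (A : Fin m → Matrix (Fin n) (Fin n) ℝ) (b : Fin m → ℝ)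
    (hSA : StandingAssumptions C Cbar A b)
    (I : Set ℝ) (hIsub : I ⊆ interior (Eset C Cbar A b)) (hIopen : IsOpen I)
    (hIconn : I.OrdConnected)
    (hreg : ∀ ε ∈ I, ∃ (X S : Matrix (Fin n) (Fin n) ℝ) (y : Fin m → ℝ),
      MaxComp C Cbar A b ε X y S ∧ JNonsingular A X S)
    (hmax : ∀ I' : Set ℝ, I ⊆ I' → I' ⊆ interior (Eset C Cbar A b) → IsOpen I' →
      I'.OrdConnected →
      (∀ ε ∈ I', ∃ (X S : Matrix (Fin n) (Fin n) ℝ) (y : Fin m → ℝ),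
        MaxComp C Cbar A b ε X y S ∧ JNonsingular A X S) → I' = I)
    (εbar : ℝ) (hεbar : εbar ∈ interior (Eset C Cbar A b)) (hfr : εbar ∈ frontier I) :
    (¬ HasStrictComp C Cbar A b εbar → IsTransitionPoint C Cbar A b εbar) ∧
      (((∃ X, PrimalOpt C Cbar A b εbar = {X}) ∧ (∃ p, DualOpt C Cbar A b εbar = {p})) →
        IsTransitionPoint C Cbar A b εbar) := by
  have hfreq : ∃ᶠ e in 𝓝 εbar, IsRegularParameter C Cbar A b e :=
    (mem_closure_iff_frequently.1 (frontier_subset_closure hfr)).mono hreg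
  have hpart₁ := isTransitionPoint_of_frequently_isRegularParameter hSA hεbar hfreq
  refine ⟨hpart₁, fun ⟨⟨X, hP⟩, p, hD⟩ => hpart₁ fun hsc => ?_⟩
  have hnear := eventually_isRegularParameter hSA hεbar (hP ▸ subsingleton_singleton)
    (hD ▸ subsingleton_singleton) hsc
  refine notMem_frontier_of_forall_superset_eq (Q := fun e => e ∈ interior (Eset C Cbar A b) ∧
    IsRegularParameter C Cbar A b e) hIopen hIconn.isPreconnected
    (fun e he => ⟨hIsub he, hreg e he⟩) (fun J hIJ hJ hJconn hJreg => ?_)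
    ((isOpen_interior.eventually_mem hεbar).and hnear) hfr
  exact hmax J hIJ (fun e he => (hJreg e he).1) hJ hJconn.ordConnected fun e he => (hJreg e he).2
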